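/- Let λ, λ' ∈ 𝓛* be two reciprocal lattice vectors and W_𝓛 ∈ C^∞ be 𝓛-periodic. Then for all integers k, p ≥ 0 there is a constant C_{k,p} such that |⟨H_𝓛^k e^{iλ·x}, H_𝓛^k e^{iλ'·x}⟩_{L²(𝓒)}| ≤ C_{k,p} (1 + |λ|^{2k} |λ'|^{2k}) / (1 + |λ − λ'|^{2p}). -/

import Mathlib

open MeasureTheory Complex

/-!
Conjugating by the plane wave `e_l` turns `H` into the Bloch operator `½(-i∇ + l)² + W`, so
`H ^ k e_l` is `e_l` times a polynomial of degree at most `2 k` in `l` with smooth periodic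
coefficients. The matrix element is therefore the Fourier integral, at frequency `μ = l' - l`, of
such a polynomial in `l` and `l'`, and moving `(1 - Δ) ^ N` from the plane wave onto the
coefficients gains the factor `(1 + ‖μ‖²) ^ N` uniformly in `l` and `l'`. The symbols are bounded by
`(1 + ‖l‖) ^ (2 k) * (1 + ‖l'‖) ^ (2 k)` rather than `1 + ‖l‖ ^ (2 k) * ‖l'‖ ^ (2 k)`; since
`|‖l‖ - ‖l'‖| ≤ ‖μ‖`, the quotient is at most a constant times `(1 + ‖μ‖²) ^ k`, which the choice
`N = k + p` absorbs.
-/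

open WithLp (toLp)
open scoped ContDiff Matrix

section SymbolClass

variable {X 𝕜 A B F : Type*} [NormedField 𝕜] {w w' : X → ℝ} {a b : X → A}

/-- The symbols of weight `w`: families in `A` spanned by the families `x ↦ c x • v`, where the
scalars satisfy `‖c x‖ ≤ w x` and `v` is fixed. With `w x = (1 + ‖x‖) ^ m` these model the
polynomial expressions `∑ x ^ α • v α`, `|α| ≤ m`. -/
def symbolClass (𝕜 : Type*) [NormedField 𝕜] (A : Type*) [AddCommGroup A] [Module 𝕜 A]
    (w : X → ℝ) : Submodule 𝕜 (X → A) :=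
  Submodule.span 𝕜 {a | ∃ (c : X → 𝕜) (v : A), (∀ x, ‖c x‖ ≤ w x) ∧ a = fun x => c x • v}

namespace symbolClass

section Module

variable [AddCommGroup A] [Module 𝕜 A] [AddCommGroup B] [Module 𝕜 B]

lemma smul_mem {c : X → 𝕜} (hc : ∀ x, ‖c x‖ ≤ w x) (v : A) :
    (fun x => c x • v) ∈ symbolClass 𝕜 A w :=
  Submodule.subset_span ⟨c, v, hc, rfl⟩

lemma const_mem (hw : ∀ x, 1 ≤ w x) (v : A) : (fun _ => v) ∈ symbolClass 𝕜 A w := by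
  simpa using smul_mem (c := fun _ => (1 : 𝕜)) (by simpa using hw) v

lemma mono (hw : ∀ x, w x ≤ w' x) : symbolClass 𝕜 A w ≤ symbolClass 𝕜 A w' := by
  refine Submodule.span_le.2 ?_
  rintro _ ⟨c, v, hc, rfl⟩
  exact smul_mem (fun x => (hc x).trans (hw x)) v

lemma map_mem (T : A →ₗ[𝕜] B) (ha : a ∈ symbolClass 𝕜 A w) :
    (fun x => T (a x)) ∈ symbolClass 𝕜 B w := by
  suffices symbolClass 𝕜 A w ≤ (symbolClass 𝕜 B w).comap (T.compLeft X) from this ha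
  refine Submodule.span_le.2 ?_
  rintro _ ⟨c, v, hc, rfl⟩
  have := smul_mem hc (T v)
  simpa [LinearMap.compLeft, Function.comp_def] using this

lemma exists_norm_apply_le [SeminormedAddCommGroup F] [NormedSpace 𝕜 F] (φ : X → A →ₗ[𝕜] F)
    (hφ : ∀ v, ∃ K, ∀ x, ‖φ x v‖ ≤ K) (ha : a ∈ symbolClass 𝕜 A w) :
    ∃ K, ∀ x, ‖φ x (a x)‖ ≤ K * w x := by
  induction ha using Submodule.span_induction with
  | mem a ha =>
    obtain ⟨c, v, hc, rfl⟩ := ha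
    obtain ⟨K, hK⟩ := hφ v
    refine ⟨K, fun x => ?_⟩
    rw [map_smul, norm_smul, mul_comm]
    exact mul_le_mul (hK x) (hc x) (norm_nonneg _) ((norm_nonneg _).trans (hK x))
  | zero => exact ⟨0, by simp⟩
  | add a b _ _ iha ihb =>
    obtain ⟨K, hK⟩ := iha
    obtain ⟨M, hM⟩ := ihb
    refine ⟨K + M, fun x => ?_⟩
    rw [Pi.add_apply, map_add, add_mul]
    exact norm_add_le_of_le (hK x) (hM x)
  | smul r a _ iha =>
    obtain ⟨K, hK⟩ := iha
    refine ⟨‖r‖ * K, fun x => ?_⟩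
    rw [Pi.smul_apply, map_smul, norm_smul, mul_assoc]
    exact mul_le_mul_of_nonneg_left (hK x) (norm_nonneg r)

end Module

lemma mul_mem [Ring A] [Algebra 𝕜 A] (ha : a ∈ symbolClass 𝕜 A w)
    (hb : b ∈ symbolClass 𝕜 A w') :
    (fun x => a x * b x) ∈ symbolClass 𝕜 A fun x => w x * w' x := by
  suffices symbolClass 𝕜 A w * symbolClass 𝕜 A w' ≤ symbolClass 𝕜 A fun x => w x * w' x from
    this (Submodule.mul_mem_mul ha hb)
  rw [symbolClass, symbolClass, Submodule.span_mul_span, Submodule.span_le]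
  rintro _ ⟨_, ⟨c, v, hc, rfl⟩, _, ⟨c', v', hc', rfl⟩, rfl⟩
  have hcc' : ∀ x, ‖c x * c' x‖ ≤ w x * w' x := fun x =>
    norm_mul_le_of_le (hc x) (hc' x)
  have hprod : (fun x => c x • v) * (fun x => c' x • v') = fun x => (c x * c' x) • (v * v') :=
    funext fun x => smul_mul_smul_comm (c x) v (c' x) v'
  simpa only [hprod] using! smul_mem hcc' (v * v')

lemma star_mem [StarRing 𝕜] [NormedStarGroup 𝕜] [AddCommGroup A] [StarAddMonoid A] [Module 𝕜 A]
    [StarModule 𝕜 A] (ha : a ∈ symbolClass 𝕜 A w) :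
    (fun x => star (a x)) ∈ symbolClass 𝕜 A w := by
  induction ha using Submodule.span_induction with
  | mem a ha =>
    obtain ⟨c, v, hc, rfl⟩ := ha
    simp_rw [star_smul]
    exact smul_mem (fun x => (norm_star (c x)).trans_le (hc x)) (star v)
  | zero =>
    simp only [Pi.zero_apply, star_zero]
    exact zero_mem _
  | add a b _ _ iha ihb => simpa using! add_mem iha ihb
  | smul r a _ iha => simpa using! Submodule.smul_mem _ (star r) iha

end symbolClass

end SymbolClass

section SmoothPeriodic

variable {E : Type*} [NormedAddCommGroup E] [NormedSpace ℝ E] {Λ : Set E}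

/-- The *-algebra of smooth complex functions having every vector of `Λ` as a period. -/
def smoothPeriodic (Λ : Set E) : StarSubalgebra ℂ (E → ℂ) where
  carrier := {f | ContDiff ℝ ∞ f ∧ ∀ v ∈ Λ, Function.Periodic f v}
  mul_mem' hf hg := ⟨hf.1.mul hg.1, fun v hv => (hf.2 v hv).mul (hg.2 v hv)⟩
  add_mem' hf hg := ⟨hf.1.add hg.1, fun v hv => (hf.2 v hv).add (hg.2 v hv)⟩
  algebraMap_mem' _ := ⟨contDiff_const, fun _ _ _ => rfl⟩
  star_mem' hf := ⟨conjCLE.contDiff.comp hf.1, fun v hv => (hf.2 v hv).comp star⟩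

namespace smoothPeriodic

lemma differentiableAt (G : smoothPeriodic Λ) (x : E) : DifferentiableAt ℝ G.1 x :=
  G.2.1.differentiable (by simp) x

lemma fderiv_apply_mem {f : E → ℂ} (hf : f ∈ smoothPeriodic Λ) (v : E) :
    (fun x => fderiv ℝ f x v) ∈ smoothPeriodic Λ := by
  refine ⟨(hf.1.fderiv_right (m := ∞) (by simp)).clm_apply contDiff_const, fun p hp x => ?_⟩
  have hper : (fun y => f (y + p)) = f := funext (hf.2 p hp)
  change fderiv ℝ f (x + p) v = fderiv ℝ f x v
  rw [← fderiv_comp_add_right, hper]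

/-- The derivative in the direction `v`, as an endomorphism of the smooth periodic functions. -/
noncomputable def dirDeriv (v : E) : Module.End ℂ (smoothPeriodic Λ) where
  toFun G := ⟨fun x => fderiv ℝ G.1 x v, fderiv_apply_mem G.2 v⟩
  map_add' G H := by
    ext x
    exact DFunLike.congr_fun (fderiv_add (differentiableAt G x) (differentiableAt H x)) v
  map_smul' c G := by
    ext x
    exact DFunLike.congr_fun (fderiv_const_smul (differentiableAt G x) c) v

end smoothPeriodic

end SmoothPeriodic

section PlaneWave

variable {d : ℕ} {Λ : Set (Fin d → ℝ)}

/-- The plane wave `x ↦ exp (i l·x)`. The frequency lives in `EuclideanSpace`, so that `‖l‖` is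
the Euclidean norm. -/
noncomputable def planeWave (l : EuclideanSpace ℝ (Fin d)) (x : Fin d → ℝ) : ℂ :=
  exp (I * (∑ i, l i * x i : ℝ))

lemma norm_planeWave (l : EuclideanSpace ℝ (Fin d)) (x : Fin d → ℝ) : ‖planeWave l x‖ = 1 := by
  rw [planeWave, mul_comm, norm_exp_ofReal_mul_I]

lemma contDiff_planeWave (l : EuclideanSpace ℝ (Fin d)) : ContDiff ℝ ∞ (planeWave l) := by
  have hphase : ContDiff ℝ ∞ fun x : Fin d → ℝ => ∑ i, l i * x i := by fun_prop
  exact (contDiff_const.mul (ofRealCLM.contDiff.comp hphase)).cexp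

lemma star_planeWave_mul_planeWave (l l' : EuclideanSpace ℝ (Fin d)) :
    star (planeWave l) * planeWave l' = planeWave (l' - l) := by
  ext x
  simp only [planeWave, Pi.mul_apply, Pi.star_apply, RCLike.star_def, ← exp_conj, ← exp_add,
    map_mul, conj_I, conj_ofReal, PiLp.sub_apply, sub_mul, Finset.sum_sub_distrib, ofReal_sub]
  ring_nf

lemma fderiv_planeWave (l : EuclideanSpace ℝ (Fin d)) (x v : Fin d → ℝ) :
    fderiv ℝ (planeWave l) x v = I * (∑ i, l i * v i : ℝ) * planeWave l x := by
  let phase : (Fin d → ℝ) →L[ℝ] ℝ := ∑ i, l i • ContinuousLinearMap.proj i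
  have hphase : ∀ y, phase y = ∑ i, l i * y i := fun y => by simp [phase]
  have hderiv : HasFDerivAt (planeWave l)
      (exp (I * phase x) • I • ofRealCLM.comp phase) x := by
    have := ((ofRealCLM.comp phase).hasFDerivAt (x := x)).const_mul I |>.cexp
    simpa only [ContinuousLinearMap.comp_apply, hphase, ofRealCLM_apply] using! this
  rw [hderiv.fderiv]
  simp only [smul_apply, ContinuousLinearMap.comp_apply, ofRealCLM_apply,
    smul_eq_mul, hphase, planeWave]
  ring

/-- The derivative `∂ᵥ + i l·v` in the direction `v` conjugated by the plane wave of frequency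
`l`. -/
noncomputable def twistedDeriv (l : EuclideanSpace ℝ (Fin d)) (v : Fin d → ℝ) :
    Module.End ℂ (smoothPeriodic Λ) :=
  smoothPeriodic.dirDeriv v + (I * (∑ i, l i * v i : ℝ)) • 1

lemma fderiv_mul_planeWave (l : EuclideanSpace ℝ (Fin d)) (G : smoothPeriodic Λ)
    (x v : Fin d → ℝ) :
    fderiv ℝ (fun y => G.1 y * planeWave l y) x v = (twistedDeriv l v G).1 x * planeWave l x := by
  have hwave := (contDiff_planeWave l).differentiable (by simp) x
  rw [fderiv_fun_mul (smoothPeriodic.differentiableAt G x) hwave]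
  change G.1 x * fderiv ℝ (planeWave l) x v + planeWave l x * fderiv ℝ G.1 x v =
    (fderiv ℝ G.1 x v + I * (∑ i, l i * v i : ℝ) * G.1 x) * planeWave l x
  rw [fderiv_planeWave]
  ring

/-- The Schrödinger operator `-½Δ + W`. -/
noncomputable def schrodinger (W f : (Fin d → ℝ) → ℂ) (x : Fin d → ℝ) : ℂ :=
  (-(1 / 2) : ℂ) * (∑ i, fderiv ℝ
      (fun y => fderiv ℝ f y (Pi.single i (1 : ℝ))) x (Pi.single i (1 : ℝ)))
    + W x * f x

/-- The Bloch operator `½(-i∇ + l)² + W`, which is the Schrödinger operator conjugated by the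
plane wave of frequency `l`. -/
noncomputable def blochOperator (W : smoothPeriodic Λ) (l : EuclideanSpace ℝ (Fin d)) :
    Module.End ℂ (smoothPeriodic Λ) :=
  (-(1 / 2) : ℂ) • ∑ i, twistedDeriv l (Pi.single i 1) ^ 2 + LinearMap.mulLeft ℂ W

lemma schrodinger_mul_planeWave (W : smoothPeriodic Λ) (l : EuclideanSpace ℝ (Fin d))
    (G : smoothPeriodic Λ) :
    schrodinger W (fun x => G.1 x * planeWave l x) =
      fun x => (blochOperator W l G).1 x * planeWave l x := by
  ext x
  simp only [schrodinger, fderiv_mul_planeWave, blochOperator, pow_two]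
  simp [add_mul, Finset.sum_mul, mul_assoc]

lemma schrodinger_iterate_planeWave (W : smoothPeriodic Λ) (l : EuclideanSpace ℝ (Fin d))
    (k : ℕ) :
    (schrodinger W)^[k] (planeWave l) =
      fun x => ((blochOperator W l ^ k) 1).1 x * planeWave l x := by
  induction k with
  | zero => simp
  | succ k ih =>
    rw [Function.iterate_succ_apply', ih, schrodinger_mul_planeWave, pow_succ',
      Module.End.mul_apply]

section Symbols

variable {X : Type*} {l : X → EuclideanSpace ℝ (Fin d)} {a : X → smoothPeriodic Λ}

lemma twistedDeriv_mem_symbolClass {n : ℕ} (i : Fin d)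
    (ha : a ∈ symbolClass ℂ (smoothPeriodic Λ) fun x => (1 + ‖l x‖) ^ n) :
    (fun x => twistedDeriv (l x) (Pi.single i 1) (a x)) ∈
      symbolClass ℂ (smoothPeriodic Λ) fun x => (1 + ‖l x‖) ^ (n + 1) := by
  have hcoord : ∀ x, ‖I * (l x i : ℂ)‖ ≤ 1 + ‖l x‖ := fun x => by
    simpa using (PiLp.norm_apply_le (l x) i).trans (le_add_of_nonneg_left zero_le_one)
  have hderiv := symbolClass.mono (fun x => pow_le_pow_right₀
    (le_add_of_nonneg_right (norm_nonneg (l x))) n.le_succ)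
    (symbolClass.map_mem (smoothPeriodic.dirDeriv (Pi.single i 1)) ha)
  have hmul := symbolClass.mul_mem (symbolClass.smul_mem hcoord 1) ha
  simp only [smul_mul_assoc, one_mul, ← pow_succ'] at hmul
  simpa [twistedDeriv, Pi.single_apply] using! add_mem hderiv hmul

lemma blochOperator_mem_symbolClass {n : ℕ} (W : smoothPeriodic Λ)
    (ha : a ∈ symbolClass ℂ (smoothPeriodic Λ) fun x => (1 + ‖l x‖) ^ n) :
    (fun x => blochOperator W (l x) (a x)) ∈
      symbolClass ℂ (smoothPeriodic Λ) fun x => (1 + ‖l x‖) ^ (n + 2) := by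
  have hkinetic := Submodule.smul_mem _ (-(1 / 2) : ℂ) (Submodule.sum_mem _
    fun i (_ : i ∈ Finset.univ) =>
      twistedDeriv_mem_symbolClass i (twistedDeriv_mem_symbolClass i ha))
  have hpotential := symbolClass.mono (fun x => pow_le_pow_right₀
    (le_add_of_nonneg_right (norm_nonneg (l x))) (n.le_add_right 2))
    (symbolClass.map_mem (LinearMap.mulLeft ℂ W) ha)
  convert add_mem hkinetic hpotential using 1
  ext x : 1
  simp [blochOperator, pow_two]

lemma blochOperator_pow_one_mem_symbolClass (W : smoothPeriodic Λ)
    (l : X → EuclideanSpace ℝ (Fin d)) (k : ℕ) :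
    (fun x => (blochOperator W (l x) ^ k) 1) ∈
      symbolClass ℂ (smoothPeriodic Λ) fun x => (1 + ‖l x‖) ^ (2 * k) := by
  induction k with
  | zero => simpa using symbolClass.const_mem (fun _ : X => le_rfl) 1
  | succ k ih =>
    simp_rw [pow_succ' (blochOperator W _), Module.End.mul_apply]
    exact blochOperator_mem_symbolClass W ih

end Symbols

end PlaneWave

section FundamentalCell

variable {d : ℕ} {F : Type*} [NormedAddCommGroup F] [NormedSpace ℝ F] {u : (Fin d → ℝ) → F}

theorem integral_Icc_fderiv_eq_zero {a b : Fin d → ℝ} (hab : b = a + 1) (hu : ContDiff ℝ 1 u)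
    (hper : ∀ i, Function.Periodic u (Pi.single i 1)) (v : Fin d → ℝ) :
    ∫ x in Set.Icc a b, fderiv ℝ u x v = 0 := by
  have hdiv : ∀ x, fderiv ℝ u x v = ∑ i, (v i • fderiv ℝ u x) (Pi.single i 1) := fun x => by
    conv_lhs => rw [pi_eq_sum_univ' v]
    simp
  cases d with
  | zero => simp [hdiv]
  | succ n =>
    have hint : IntegrableOn (fun x => ∑ i, (v i • fderiv ℝ u x) (Pi.single i 1))
        (Set.Icc a b) := by
      simp_rw [← hdiv]
      exact ((hu.continuous_fderiv (by simp)).clm_apply continuous_const).integrableOn_Icc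
    have hfaces := integral_divergence_of_hasFDerivAt_off_countable' a b
      (hab ▸ le_add_of_nonneg_right zero_le_one)
      (fun i x => v i • u x) (fun i x => v i • fderiv ℝ u x) ∅ Set.countable_empty
      (fun i => (hu.continuous.const_smul (v i)).continuousOn)
      (fun x _ i => (hu.differentiable (by simp) x).hasFDerivAt.const_smul (v i)) hint
    have hopposite : ∀ (i : Fin (n + 1)) (x : Fin n → ℝ),
        u (i.insertNth (b i) x) = u (i.insertNth (a i) x) := fun i x => by
      rw [← hper i (i.insertNth (a i) x), hab]
      congr 1
      ext j
      cases j using i.succAboveCases <;> simp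
    simp_rw [hdiv, hfaces, hopposite, sub_self, Finset.sum_const_zero]

/-- The lattice spanned by the columns of `L`. -/
def columnLattice (L : Matrix (Fin d) (Fin d) ℝ) : Set (Fin d → ℝ) :=
  {x | ∃ z : Fin d → ℤ, x = L *ᵥ fun i => (z i : ℝ)}

/-- The fundamental cell of the lattice spanned by the columns of `L`, centred at the origin. -/
def unitCell (L : Matrix (Fin d) (Fin d) ℝ) : Set (Fin d → ℝ) :=
  (fun t => L *ᵥ t) '' Set.Icc (fun _ => -(1 / 2 : ℝ)) (fun _ => (1 / 2 : ℝ))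

lemma isCompact_unitCell (L : Matrix (Fin d) (Fin d) ℝ) : IsCompact (unitCell L) :=
  isCompact_Icc.image (by fun_prop)

theorem integral_unitCell_fderiv_eq_zero {L : Matrix (Fin d) (Fin d) ℝ} (hL : L.det ≠ 0)
    (hu : ContDiff ℝ 1 u) (hper : ∀ v ∈ columnLattice L, Function.Periodic u v)
    (v : Fin d → ℝ) :
    ∫ x in unitCell L, fderiv ℝ u x v = 0 := by
  let A : (Fin d → ℝ) →L[ℝ] (Fin d → ℝ) := L.mulVecLin.toContinuousLinearMap
  have hA : ∀ t, A t = L *ᵥ t := fun _ => rfl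
  have hinj : Function.Injective A :=
    Matrix.mulVec_injective_iff_isUnit.2 ((Matrix.isUnit_iff_isUnit_det L).2 hL.isUnit)
  have hcube : ∫ t in Set.Icc (fun _ => -(1 / 2 : ℝ)) (fun _ => (1 / 2 : ℝ)),
      fderiv ℝ (u ∘ A) t (L⁻¹ *ᵥ v) = 0 := by
    refine integral_Icc_fderiv_eq_zero (by ext; norm_num) (hu.comp A.contDiff) (fun i t => ?_) _
    simp only [Function.comp_apply, map_add]
    refine hper _ ⟨Pi.single i 1, congrArg (L *ᵥ ·) ?_⟩ (A t)
    ext j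
    simp [Pi.single_apply]
  have hchain : ∀ t, fderiv ℝ (u ∘ A) t (L⁻¹ *ᵥ v) = fderiv ℝ u (A t) v := fun t => by
    rw [fderiv_comp t (hu.differentiable (by simp) _) A.differentiableAt,
      ContinuousLinearMap.fderiv, ContinuousLinearMap.comp_apply, hA (L⁻¹ *ᵥ v),
      Matrix.mulVec_mulVec, Matrix.mul_nonsing_inv L hL.isUnit, Matrix.one_mulVec]
  change ∫ x in A '' _, fderiv ℝ u x v = 0
  rw [integral_image_eq_integral_abs_det_fderiv_smul volume measurableSet_Icc
    (fun t _ => A.hasFDerivAt.hasFDerivWithinAt) hinj.injOn, integral_smul]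
  simp_rw [← hchain, hcube, smul_zero]

lemma planeWave_mem_smoothPeriodic {L Lstar : Matrix (Fin d) (Fin d) ℝ}
    (hrec : Lᵀ * Lstar = (2 * Real.pi) • (1 : Matrix (Fin d) (Fin d) ℝ)) {l : Fin d → ℝ}
    (hl : l ∈ columnLattice Lstar) :
    planeWave (toLp 2 l) ∈ smoothPeriodic (columnLattice L) := by
  refine ⟨contDiff_planeWave _, ?_⟩
  obtain ⟨z, rfl⟩ := hl
  rintro _ ⟨m, rfl⟩ x
  have hpairing : ∑ i, (Lstar *ᵥ fun i => (z i : ℝ)) i * (L *ᵥ fun i => (m i : ℝ)) i =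
      (∑ i, m i * z i : ℤ) * (2 * Real.pi) := by
    change (Lstar *ᵥ fun i => (z i : ℝ)) ⬝ᵥ (L *ᵥ fun i => (m i : ℝ)) = _
    rw [dotProduct_comm, ← Matrix.vecMul_transpose, ← Matrix.dotProduct_mulVec,
      Matrix.mulVec_mulVec, hrec, Matrix.smul_mulVec, Matrix.one_mulVec, dotProduct_smul]
    simp [dotProduct, mul_comm]
  simp only [planeWave, Pi.add_apply, mul_add, Finset.sum_add_distrib, hpairing]
  rw [ofReal_add, mul_add, exp_add]
  convert mul_one _
  rw [← exp_int_mul_two_pi_mul_I (∑ i, m i * z i)]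
  push_cast
  ring_nf

end FundamentalCell

section FourierDecay

variable {d : ℕ} {L : Matrix (Fin d) (Fin d) ℝ} {μ : EuclideanSpace ℝ (Fin d)}

lemma integrableOn_mul_planeWave (G : smoothPeriodic (columnLattice L))
    (μ : EuclideanSpace ℝ (Fin d)) :
    IntegrableOn (fun x => G.1 x * planeWave μ x) (unitCell L) :=
  (G.2.1.continuous.mul (contDiff_planeWave μ).continuous).continuousOn.integrableOn_compact
    (isCompact_unitCell L)

/-- The Fourier integral of a smooth periodic function over the fundamental cell, at the
frequency `-μ` and without normalization. -/
noncomputable def fourierIntegralCell (L : Matrix (Fin d) (Fin d) ℝ)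
    (μ : EuclideanSpace ℝ (Fin d)) : smoothPeriodic (columnLattice L) →ₗ[ℂ] ℂ where
  toFun G := ∫ x in unitCell L, G.1 x * planeWave μ x
  map_add' G H := by
    rw [← integral_add (integrableOn_mul_planeWave G μ) (integrableOn_mul_planeWave H μ)]
    exact integral_congr_ae (.of_forall fun x => add_mul (G.1 x) (H.1 x) (planeWave μ x))
  map_smul' c G := by
    rw [RingHom.id_apply, smul_eq_mul, ← integral_const_mul]
    exact integral_congr_ae (.of_forall fun x => mul_assoc c (G.1 x) (planeWave μ x))

lemma norm_fourierIntegralCell_le (G : smoothPeriodic (columnLattice L))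
    (μ : EuclideanSpace ℝ (Fin d)) :
    ‖fourierIntegralCell L μ G‖ ≤ ∫ x in unitCell L, ‖G.1 x‖ := by
  refine (norm_integral_le_integral_norm _).trans_eq ?_
  simp only [norm_mul, norm_planeWave, mul_one]

lemma fourierIntegralCell_dirDeriv (hL : L.det ≠ 0)
    (hμ : planeWave μ ∈ smoothPeriodic (columnLattice L)) (v : Fin d → ℝ)
    (G : smoothPeriodic (columnLattice L)) :
    fourierIntegralCell L μ (smoothPeriodic.dirDeriv v G) =
      -(I * (∑ i, μ i * v i : ℝ)) * fourierIntegralCell L μ G := by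
  have htwisted : fourierIntegralCell L μ (twistedDeriv μ v G) = 0 := by
    have hprod := mul_mem G.2 hμ
    have hzero := integral_unitCell_fderiv_eq_zero hL (hprod.1.of_le (by simp)) hprod.2 v
    exact (integral_congr_ae (.of_forall fun x => (fderiv_mul_planeWave μ G x v).symm)).trans hzero
  rw [twistedDeriv, LinearMap.add_apply, map_add, LinearMap.smul_apply, map_smul,
    Module.End.one_apply, smul_eq_mul] at htwisted
  linear_combination htwisted

/-- The operator `1 - Δ` on smooth periodic functions. -/
noncomputable def oneSubLaplacian {Λ : Set (Fin d → ℝ)} : Module.End ℂ (smoothPeriodic Λ) :=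
  1 - ∑ i, smoothPeriodic.dirDeriv (Pi.single i 1) ^ 2

lemma fourierIntegralCell_oneSubLaplacian (hL : L.det ≠ 0)
    (hμ : planeWave μ ∈ smoothPeriodic (columnLattice L))
    (G : smoothPeriodic (columnLattice L)) :
    fourierIntegralCell L μ (oneSubLaplacian G) =
      (1 + ‖μ‖ ^ 2 : ℝ) * fourierIntegralCell L μ G := by
  have hsecond : ∀ i, fourierIntegralCell L μ
      ((smoothPeriodic.dirDeriv (Pi.single i 1) ^ 2) G) =
        -(μ i : ℂ) ^ 2 * fourierIntegralCell L μ G := fun i => by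
    rw [pow_two, Module.End.mul_apply, fourierIntegralCell_dirDeriv hL hμ,
      fourierIntegralCell_dirDeriv hL hμ]
    simp only [Pi.single_apply, mul_ite, mul_one, mul_zero, Finset.sum_ite_eq', Finset.mem_univ,
      if_true]
    linear_combination (μ i : ℂ) ^ 2 * fourierIntegralCell L μ G * I_sq
  rw [oneSubLaplacian, LinearMap.sub_apply, map_sub, LinearMap.sum_apply, map_sum]
  simp_rw [hsecond, ← Finset.sum_mul]
  rw [EuclideanSpace.real_norm_sq_eq]
  push_cast
  rw [Finset.sum_neg_distrib, Module.End.one_apply]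
  ring

lemma fourierIntegralCell_oneSubLaplacian_pow (hL : L.det ≠ 0)
    (hμ : planeWave μ ∈ smoothPeriodic (columnLattice L)) (N : ℕ)
    (G : smoothPeriodic (columnLattice L)) :
    fourierIntegralCell L μ ((oneSubLaplacian ^ N) G) =
      ((1 + ‖μ‖ ^ 2) ^ N : ℝ) * fourierIntegralCell L μ G := by
  induction N with
  | zero => simp
  | succ N ih =>
    rw [pow_succ', Module.End.mul_apply, fourierIntegralCell_oneSubLaplacian hL hμ, ih, pow_succ']
    push_cast
    ring

theorem pow_mul_norm_fourierIntegralCell_le (hL : L.det ≠ 0)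
    (hμ : planeWave μ ∈ smoothPeriodic (columnLattice L)) (N : ℕ)
    (G : smoothPeriodic (columnLattice L)) :
    (1 + ‖μ‖ ^ 2) ^ N * ‖fourierIntegralCell L μ G‖ ≤
      ∫ x in unitCell L, ‖((oneSubLaplacian ^ N) G).1 x‖ := by
  refine le_trans (le_of_eq ?_) (norm_fourierIntegralCell_le _ μ)
  rw [fourierIntegralCell_oneSubLaplacian_pow hL hμ, norm_mul, norm_real,
    Real.norm_of_nonneg (by positivity)]

end FourierDecay

section PlaneWaveDecay

lemma sq_mul_sq_le_of_abs_sub_le {a b δ : ℝ} (hab : |a - b| ≤ δ) :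
    (1 + a) ^ 2 * (1 + b) ^ 2 ≤ 8 * (1 + a ^ 2 * b ^ 2) * (1 + δ ^ 2) := by
  have hdiff : (a - b) ^ 2 ≤ δ ^ 2 := sq_le_sq' (abs_le.1 hab).1 (abs_le.1 hab).2
  calc (1 + a) ^ 2 * (1 + b) ^ 2
      ≤ (2 * (1 + a ^ 2)) * (2 * (1 + b ^ 2)) := by
        gcongr
        · linarith [sq_nonneg (1 - a)]
        · linarith [sq_nonneg (1 - b)]
    _ ≤ 4 * (2 * (1 + a ^ 2 * b ^ 2) + δ ^ 2) := by linarith [sq_nonneg (1 - a * b)]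
    _ ≤ 8 * (1 + a ^ 2 * b ^ 2) * (1 + δ ^ 2) := by
        linarith [sq_nonneg δ, mul_nonneg (sq_nonneg (a * b)) (sq_nonneg δ)]

lemma pow_mul_pow_mul_le_of_abs_sub_le {a b δ : ℝ} (hab : |a - b| ≤ δ) (k p : ℕ) :
    (1 + a) ^ (2 * k) * (1 + b) ^ (2 * k) * (1 + δ ^ (2 * p)) ≤
      2 * 16 ^ k * (1 + a ^ (2 * k) * b ^ (2 * k)) * (1 + δ ^ 2) ^ (k + p) := by
  simp only [pow_mul]
  have hsum : (1 + a ^ 2 * b ^ 2) ^ k ≤ 2 ^ k * (1 + (a ^ 2) ^ k * (b ^ 2) ^ k) := by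
    calc (1 + a ^ 2 * b ^ 2) ^ k
        ≤ 2 ^ (k - 1) * (1 ^ k + (a ^ 2 * b ^ 2) ^ k) := add_pow_le zero_le_one (by positivity) k
      _ = 2 ^ (k - 1) * (1 + (a ^ 2) ^ k * (b ^ 2) ^ k) := by rw [one_pow, mul_pow]
      _ ≤ 2 ^ k * (1 + (a ^ 2) ^ k * (b ^ 2) ^ k) := by
        gcongr
        · norm_num
        · exact k.sub_le 1
  have hδ : 1 + (δ ^ 2) ^ p ≤ 2 * (1 + δ ^ 2) ^ p := by
    simpa only [one_pow] using pow_add_pow_le' (n := p) zero_le_one (sq_nonneg δ)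
  calc ((1 + a) ^ 2) ^ k * ((1 + b) ^ 2) ^ k * (1 + (δ ^ 2) ^ p)
      = ((1 + a) ^ 2 * (1 + b) ^ 2) ^ k * (1 + (δ ^ 2) ^ p) := by rw [mul_pow]
    _ ≤ (8 * (1 + a ^ 2 * b ^ 2) * (1 + δ ^ 2)) ^ k * (2 * (1 + δ ^ 2) ^ p) := by
        gcongr ?_ ^ k * ?_
        exact sq_mul_sq_le_of_abs_sub_le hab
    _ = 2 * 8 ^ k * (1 + a ^ 2 * b ^ 2) ^ k * (1 + δ ^ 2) ^ (k + p) := by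
        rw [mul_pow, mul_pow, pow_add]
        ring
    _ ≤ 2 * 8 ^ k * (2 ^ k * (1 + (a ^ 2) ^ k * (b ^ 2) ^ k)) * (1 + δ ^ 2) ^ (k + p) := by gcongr
    _ = 2 * 16 ^ k * (1 + (a ^ 2) ^ k * (b ^ 2) ^ k) * (1 + δ ^ 2) ^ (k + p) := by
        rw [(by norm_num : (16 : ℝ) = 8 * 2), mul_pow]
        ring

variable {d : ℕ} {L : Matrix (Fin d) (Fin d) ℝ}

lemma integral_schrodinger_iterate_planeWave (W : smoothPeriodic (columnLattice L))
    (l l' : EuclideanSpace ℝ (Fin d)) (k : ℕ) :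
    ∫ x in unitCell L, (starRingEnd ℂ) ((schrodinger W)^[k] (planeWave l) x) *
        (schrodinger W)^[k] (planeWave l') x =
      fourierIntegralCell L (l' - l)
        (star ((blochOperator W l ^ k) 1) * (blochOperator W l' ^ k) 1) := by
  simp_rw [schrodinger_iterate_planeWave]
  refine integral_congr_ae (.of_forall fun x => ?_)
  change starRingEnd ℂ (_ * planeWave l x) * (_ * planeWave l' x) = starRingEnd ℂ _ * _ * _
  rw [← star_planeWave_mul_planeWave, map_mul]
  exact mul_mul_mul_comm _ _ _ _

lemma exists_pow_mul_norm_fourierIntegralCell_le (hL : L.det ≠ 0) {X : Type*}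
    {μ : X → EuclideanSpace ℝ (Fin d)}
    (hμ : ∀ x, planeWave (μ x) ∈ smoothPeriodic (columnLattice L)) {w : X → ℝ}
    {a : X → smoothPeriodic (columnLattice L)}
    (ha : a ∈ symbolClass ℂ (smoothPeriodic (columnLattice L)) w) (N : ℕ) :
    ∃ K, ∀ x, (1 + ‖μ x‖ ^ 2) ^ N * ‖fourierIntegralCell L (μ x) (a x)‖ ≤ K * w x := by
  let φ x := (((1 + ‖μ x‖ ^ 2) ^ N : ℝ) : ℂ) • fourierIntegralCell L (μ x)
  have hφ : ∀ x G, ‖φ x G‖ = (1 + ‖μ x‖ ^ 2) ^ N * ‖fourierIntegralCell L (μ x) G‖ :=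
    fun x G => by
      rw [LinearMap.smul_apply, norm_smul, norm_real, Real.norm_of_nonneg (by positivity)]
  have hbound : ∀ G, ∃ K, ∀ x, ‖φ x G‖ ≤ K := fun G =>
    ⟨_, fun x => (hφ x G).trans_le (pow_mul_norm_fourierIntegralCell_le hL (hμ x) N G)⟩
  simpa only [hφ] using symbolClass.exists_norm_apply_le φ hbound ha

end PlaneWaveDecay

theorem plane_wave_matrix_element_decay_general {d : ℕ} {L : Matrix (Fin d) (Fin d) ℝ}
    (hL : L.det ≠ 0) (W : smoothPeriodic (columnLattice L)) (k p : ℕ) :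
    ∃ K > 0, ∀ l l' : EuclideanSpace ℝ (Fin d),
      planeWave (l' - l) ∈ smoothPeriodic (columnLattice L) →
      ‖∫ x in unitCell L, (starRingEnd ℂ) ((schrodinger W)^[k] (planeWave l) x) *
          (schrodinger W)^[k] (planeWave l') x‖ ≤
        K * (1 + ‖l‖ ^ (2 * k) * ‖l'‖ ^ (2 * k)) / (1 + ‖l - l'‖ ^ (2 * p)) := by
  let X := {q : EuclideanSpace ℝ (Fin d) × EuclideanSpace ℝ (Fin d) //
    planeWave (q.2 - q.1) ∈ smoothPeriodic (columnLattice L)}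
  have hsymbol := symbolClass.mul_mem
    (symbolClass.star_mem (blochOperator_pow_one_mem_symbolClass W (fun q : X => q.1.1) k))
    (blochOperator_pow_one_mem_symbolClass W (fun q : X => q.1.2) k)
  obtain ⟨K, hK⟩ := exists_pow_mul_norm_fourierIntegralCell_le hL (fun q : X => q.2) hsymbol (k + p)
  refine ⟨max K 1 * (2 * 16 ^ k), by positivity, fun l l' hll' => ?_⟩
  rw [integral_schrodinger_iterate_planeWave, le_div_iff₀ (by positivity), norm_sub_rev l l']
  have hgrowth := pow_mul_pow_mul_le_of_abs_sub_le
    (norm_sub_rev l' l ▸ abs_norm_sub_norm_le l l') k p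
  refine le_of_mul_le_mul_left ?_ (by positivity : 0 < (1 + ‖l' - l‖ ^ 2) ^ (k + p))
  calc _ = (1 + ‖l' - l‖ ^ 2) ^ (k + p) * ‖fourierIntegralCell L (l' - l)
        (star ((blochOperator W l ^ k) 1) * (blochOperator W l' ^ k) 1)‖ *
          (1 + ‖l' - l‖ ^ (2 * p)) := (mul_assoc _ _ _).symm
    _ ≤ max K 1 * ((1 + ‖l‖) ^ (2 * k) * (1 + ‖l'‖) ^ (2 * k)) *
          (1 + ‖l' - l‖ ^ (2 * p)) := by
      gcongr ?_ * _
      refine (hK ⟨(l, l'), hll'⟩).trans ?_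
      gcongr
      exact le_max_left K 1
    _ ≤ max K 1 * (2 * 16 ^ k * (1 + ‖l‖ ^ (2 * k) * ‖l'‖ ^ (2 * k)) *
          (1 + ‖l' - l‖ ^ 2) ^ (k + p)) := by
      rw [mul_assoc]
      gcongr
    _ = _ := by ring

/-- For λ, λ' in the reciprocal lattice 𝓛* and W_𝓛 ∈ C^∞
𝓛-periodic, for all integers k, p ≥ 0 there is C_{k,p} > 0 such that
|⟨H_𝓛^k e^{iλ·x}, H_𝓛^k e^{iλ'·x}⟩_{L²(𝓒)}| ≤
C_{k,p} (1 + |λ|^{2k} |λ'|^{2k}) / (1 + |λ − λ'|^{2p}),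
with H_𝓛 = −½Δ + W_𝓛 and |·| the Euclidean norm. -/
theorem plane_wave_matrix_element_decay
    (d : ℕ) (L Lstar : Matrix (Fin d) (Fin d) ℝ) (hdet : L.det ≠ 0)
    (hrec : L.transpose * Lstar = (2 * Real.pi) • (1 : Matrix (Fin d) (Fin d) ℝ))
    (C : Set (Fin d → ℝ))
    (hC : C = (fun t => L.mulVec t) ''
      Set.Icc (fun _ => -(1/2 : ℝ)) (fun _ => (1/2 : ℝ)))
    (Lat : Set (Fin d → ℝ))
    (hLat : Lat = {x | ∃ z : Fin d → ℤ, x = Lstar.mulVec (fun i => (z i : ℝ))})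
    (W : (Fin d → ℝ) → ℝ)
    (hWsmooth : ContDiff ℝ (⊤ : ℕ∞) W)
    (hWper : ∀ (z : Fin d → ℝ) (m : Fin d → ℤ),
      W (z + L.mulVec (fun i => (m i : ℝ))) = W z)
    (Hop : ((Fin d → ℝ) → ℂ) → ((Fin d → ℝ) → ℂ))
    (hHop : ∀ (f : (Fin d → ℝ) → ℂ) (x : Fin d → ℝ),
      Hop f x = (-(1/2) : ℂ) * (∑ i, fderiv ℝ
          (fun y => fderiv ℝ f y (Pi.single i (1 : ℝ))) x (Pi.single i (1 : ℝ)))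
        + (W x : ℂ) * f x) :
    ∀ k p : ℕ, ∃ Ckp > 0, ∀ lam lam' : Fin d → ℝ, lam ∈ Lat → lam' ∈ Lat →
      ‖∫ x in C,
          (starRingEnd ℂ) ((Hop^[k] (fun y => Complex.exp (Complex.I * (∑ i, lam i * y i : ℝ)))) x) *
            (Hop^[k] (fun y => Complex.exp (Complex.I * (∑ i, lam' i * y i : ℝ)))) x‖
        ≤ Ckp * (1 + Real.sqrt (∑ i, (lam i) ^ 2) ^ (2 * k) *
              Real.sqrt (∑ i, (lam' i) ^ 2) ^ (2 * k)) /
            (1 + Real.sqrt (∑ i, (lam i - lam' i) ^ 2) ^ (2 * p)) := by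
  subst hC hLat
  obtain rfl : Hop = schrodinger (fun x => (W x : ℂ)) := funext₂ hHop
  intro k p
  obtain ⟨K, hK, hdecay⟩ := plane_wave_matrix_element_decay_general hdet
    ⟨fun x => W x, ofRealCLM.contDiff.comp hWsmooth, by
      rintro _ ⟨m, rfl⟩ x
      exact congrArg ofReal (hWper x m)⟩ k p
  refine ⟨K, hK, fun l l' hl hl' => ?_⟩
  have hdiff : planeWave (toLp 2 l' - toLp 2 l) ∈ smoothPeriodic (columnLattice L) :=
    star_planeWave_mul_planeWave _ _ ▸ mul_mem (star_mem (planeWave_mem_smoothPeriodic hrec hl))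
      (planeWave_mem_smoothPeriodic hrec hl')
  have hbound := hdecay (toLp 2 l) (toLp 2 l') hdiff
  simp only [EuclideanSpace.norm_eq, Real.norm_eq_abs, sq_abs] at hbound
  exact hbound
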